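/- The bump tower f satisfies: (1) 0 ≤ f(x) ≤ (3/2)·c_f for all x ∈ ℝ; (2) the intersection ∩_{k≥0} [a_k, b_k] consists of a single point x*, which is the unique maximizer of f, with f(x*) = c_f·Σ_{k=0}^∞ w_k^m; (3) f is nondecreasing on [0, x*] and nonincreasing on [x*, 1]. -/

import Mathlib

open Set MeasureTheory

/-- The basic mollifier `u₀(x) = exp(−1/(x(1/3 − x)))` on `(0, 1/3)`, `0` elsewhere. -/
noncomputable def u0 (x : ℝ) : ℝ :=
  if x ∈ Set.Ioo (0 : ℝ) (1 / 3) then Real.exp (-(1 / (x * (1 / 3 - x)))) else 0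

/-- The normalized primitive `u(x) = (∫₀^{1/3} u₀)⁻¹ · ∫_{−∞}^x u₀`. -/
noncomputable def uFn (x : ℝ) : ℝ :=
  (∫ t in (0 : ℝ)..(1 / 3), u0 t)⁻¹ * ∫ t in Set.Iic x, u0 t

/-- The bump function `B`. -/
noncomputable def bump (x : ℝ) : ℝ :=
  if x < 0 then 0
  else if x ≤ 1 / 3 then uFn x
  else if x < 2 / 3 then 1
  else if x ≤ 1 then uFn (1 - x)
  else 0

/-- The bump function rescaled to the interval `[a, b]`. -/
noncomputable def bumpOn (a b x : ℝ) : ℝ := bump ((x - a) / (b - a))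

/-- The interval widths: `w 0 = 1` and `w k = 3^(−k!)` for `k ≥ 1`. -/
noncomputable def wSeq : ℕ → ℝ := fun k => if k = 0 then 1 else (3 : ℝ) ^ (-(k.factorial : ℤ))

/-- `a, b : ℕ → ℝ` describe an admissible nested sequence of intervals:
`[a₀,b₀] = [0,1]` and `[a_{k+1}, b_{k+1}]` is a subinterval of
`[a_k + w_k/3, b_k − w_k/3]` of length `w_{k+1}`. -/
def IsNestedTower (a b : ℕ → ℝ) : Prop :=
  a 0 = 0 ∧ b 0 = 1 ∧
  ∀ k : ℕ, a k + wSeq k / 3 ≤ a (k + 1) ∧ b (k + 1) ≤ b k - wSeq k / 3 ∧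
    b (k + 1) - a (k + 1) = wSeq (k + 1)

/-- The bump tower `f(x) = c_f·Σ_{k=0}^∞ w_k^m·B_{[a_k,b_k]}(x)`. -/
noncomputable def towerFn (m : ℕ) (cf : ℝ) (a b : ℕ → ℝ) (x : ℝ) : ℝ :=
  cf * ∑' k : ℕ, wSeq k ^ m * bumpOn (a k) (b k) x

lemma u0_nonneg (x : ℝ) : 0 ≤ u0 x := by
  unfold u0; split_ifs
  · positivity
  · exact le_rfl

lemma u0_eq_indicator : u0 = Set.indicator (Set.Ioo (0 : ℝ) (1 / 3))
    (fun x => Real.exp (-(1 / (x * (1 / 3 - x))))) := by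
  funext x
  simp only [u0, Set.indicator]

lemma u0_integrable : Integrable u0 := by
  rw [u0_eq_indicator, integrable_indicator_iff measurableSet_Ioo]
  refine Measure.integrableOn_of_bounded (M := 1) (by simp) ?_ ?_
  · exact Measurable.aestronglyMeasurable (by fun_prop)
  · refine (ae_restrict_iff' measurableSet_Ioo).2 (Filter.Eventually.of_forall ?_)
    intro x hx
    rw [Real.norm_of_nonneg (Real.exp_pos _).le, Real.exp_le_one_iff]
    have : 0 < x * (1 / 3 - x) := mul_pos hx.1 (by linarith [hx.2])
    have : 0 < 1 / (x * (1 / 3 - x)) := by positivity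
    linarith

lemma u0_int_pos : 0 < ∫ t in (0 : ℝ)..(1 / 3), u0 t := by
  apply intervalIntegral.intervalIntegral_pos_of_pos_on
  · exact u0_integrable.intervalIntegrable
  · intro x hx
    rw [u0, if_pos hx]; positivity
  · norm_num

lemma uFn_nonneg (x : ℝ) : 0 ≤ uFn x :=
  mul_nonneg (inv_nonneg.2 u0_int_pos.le) (integral_nonneg u0_nonneg)

lemma uFn_mono : Monotone uFn := by
  intro x y hxy
  refine mul_le_mul_of_nonneg_left ?_ (inv_nonneg.2 u0_int_pos.le)
  exact setIntegral_mono_set u0_integrable.integrableOn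
    (Filter.Eventually.of_forall u0_nonneg) (Set.Iic_subset_Iic.2 hxy).eventuallyLE

lemma uFn_third : uFn (1 / 3) = 1 := by
  have h0 : ∫ t in Set.Iic (0 : ℝ), u0 t = 0 := by
    apply setIntegral_eq_zero_of_forall_eq_zero
    intro x hx
    have hx' : x ≤ 0 := hx
    rw [u0, if_neg]
    intro h; linarith [h.1]
  have h := intervalIntegral.integral_Iic_sub_Iic (a := (0 : ℝ)) (b := 1 / 3)
    (u0_integrable.integrableOn) (u0_integrable.integrableOn)
  rw [h0, sub_zero] at h
  rw [uFn, h]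
  exact inv_mul_cancel₀ u0_int_pos.ne'

lemma bump_nonneg (x : ℝ) : 0 ≤ bump x := by
  unfold bump; split_ifs <;> first | exact le_rfl | exact uFn_nonneg _ | exact zero_le_one

lemma uFn_le_one {x : ℝ} (h : x ≤ 1 / 3) : uFn x ≤ 1 := uFn_third ▸ uFn_mono h

lemma bump_le_one (x : ℝ) : bump x ≤ 1 := by
  unfold bump; split_ifs
  · exact zero_le_one
  · exact uFn_le_one (by assumption)
  · exact le_rfl
  · exact uFn_le_one (by linarith)
  · exact zero_le_one

lemma bump_mid {x : ℝ} (h1 : 1 / 3 ≤ x) (h2 : x ≤ 2 / 3) : bump x = 1 := by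
  unfold bump; split_ifs
  · linarith
  · rw [show x = 1 / 3 by linarith]; exact uFn_third
  · rfl
  · rw [show 1 - x = 1 / 3 by linarith]; exact uFn_third
  · linarith

lemma bump_left {x : ℝ} (h : x < 0) : bump x = 0 := if_pos h

lemma bump_symm (x : ℝ) : bump (1 - x) = bump x := by
  rcases lt_trichotomy x (1 / 3) with h | h | h
  · unfold bump
    split_ifs <;> first | rfl | (exfalso; linarith) | (congr 1; ring)
  · rw [bump_mid (by linarith) (by linarith), bump_mid (by linarith) (by linarith)]
  · rcases le_or_gt x (2 / 3) with h' | h'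
    · rw [bump_mid (by linarith) (by linarith), bump_mid (by linarith) (by linarith)]
    · unfold bump
      split_ifs <;> first | rfl | (exfalso; linarith)

lemma bump_right {x : ℝ} (h : 1 < x) : bump x = 0 := by
  rw [← bump_symm]; exact bump_left (by linarith)

lemma bump_mono {x y : ℝ} (hxy : x ≤ y) (hy : y ≤ 2 / 3) : bump x ≤ bump y := by
  rcases lt_or_ge x 0 with h | h
  · rw [bump_left h]; exact bump_nonneg _
  · rcases lt_or_ge y (1 / 3) with h' | h'
    · unfold bump
      rw [if_neg (by linarith), if_pos (by linarith), if_neg (by linarith), if_pos (by linarith)]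
      exact uFn_mono hxy
    · rw [bump_mid h' hy]; exact bump_le_one _

lemma bump_anti {x y : ℝ} (hxy : x ≤ y) (hx : 1 / 3 ≤ x) : bump y ≤ bump x := by
  rw [← bump_symm y, ← bump_symm x]; exact bump_mono (by linarith) (by linarith)

lemma wSeq_pos (k : ℕ) : 0 < wSeq k := by
  unfold wSeq; split_ifs <;> positivity

lemma wSeq_le (k : ℕ) : wSeq k ≤ (1 / 3 : ℝ) ^ k := by
  unfold wSeq; split_ifs with h
  · simp [h]
  · rw [zpow_neg, zpow_natCast, one_div, inv_pow]
    exact inv_anti₀ (by positivity) (pow_le_pow_right₀ (by norm_num) (Nat.self_le_factorial k))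

lemma wSeq_pow_le {m : ℕ} (hm : 1 ≤ m) (k : ℕ) : wSeq k ^ m ≤ (1 / 3 : ℝ) ^ k := by
  refine le_trans ?_ (wSeq_le k)
  refine pow_le_of_le_one (wSeq_pos k).le ?_ (by omega)
  exact (wSeq_le k).trans (pow_le_one₀ (by norm_num) (by norm_num))

/-- Basic properties of the bump tower: (1) `0 ≤ f ≤ (3/2)c_f`; (2) the nested intervals
intersect in a single point `x*`, the unique maximizer of `f`, where
`f(x*) = c_f·Σ_k w_k^m`; (3) `f` is nondecreasing on `[0,x*]` and nonincreasing on
`[x*,1]`. -/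
theorem towerFn_properties (m : ℕ) (hm : 1 ≤ m) (cf : ℝ) (hcf : 0 < cf)
    (a b : ℕ → ℝ) (hab : IsNestedTower a b) :
    (∀ x : ℝ, 0 ≤ towerFn m cf a b x ∧ towerFn m cf a b x ≤ 3 / 2 * cf) ∧
    ∃ xs : ℝ,
      (⋂ k : ℕ, Set.Icc (a k) (b k)) = {xs} ∧
      towerFn m cf a b xs = cf * ∑' k : ℕ, wSeq k ^ m ∧
      (∀ x : ℝ, x ≠ xs → towerFn m cf a b x < towerFn m cf a b xs) ∧
      MonotoneOn (towerFn m cf a b) (Set.Icc 0 xs) ∧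
      AntitoneOn (towerFn m cf a b) (Set.Icc xs 1) := by
  obtain ⟨ha0, hb0, hs⟩ := hab
  have hw : ∀ k, b k - a k = wSeq k := by
    intro k
    cases k with
    | zero => simp [ha0, hb0, wSeq]
    | succ k => exact (hs k).2.2
  have hgeo : Summable (fun k : ℕ => (1 / 3 : ℝ) ^ k) :=
    summable_geometric_of_lt_one (by norm_num) (by norm_num)
  have hwp : ∀ k, 0 < wSeq k ^ m := fun k => pow_pos (wSeq_pos k) m
  have hsw : Summable (fun k => wSeq k ^ m) :=
    Summable.of_nonneg_of_le (fun k => (hwp k).le) (wSeq_pow_le hm) hgeo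
  have htn : ∀ x k, 0 ≤ wSeq k ^ m * bumpOn (a k) (b k) x :=
    fun x k => mul_nonneg (hwp k).le (bump_nonneg _)
  have htl : ∀ x k, wSeq k ^ m * bumpOn (a k) (b k) x ≤ wSeq k ^ m :=
    fun x k => mul_le_of_le_one_right (hwp k).le (bump_le_one _)
  have hst : ∀ x, Summable (fun k => wSeq k ^ m * bumpOn (a k) (b k) x) :=
    fun x => Summable.of_nonneg_of_le (htn x) (htl x) hsw
  have hsum : ∑' k, wSeq k ^ m ≤ 3 / 2 := by
    calc ∑' k, wSeq k ^ m ≤ ∑' k : ℕ, (1 / 3 : ℝ) ^ k :=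
          hsw.tsum_le_tsum (wSeq_pow_le hm) hgeo
      _ = 3 / 2 := by rw [tsum_geometric_of_lt_one (by norm_num) (by norm_num)]; norm_num
  refine ⟨fun x => ⟨mul_nonneg hcf.le (tsum_nonneg (htn x)), ?_⟩, ?_⟩
  · rw [towerFn, mul_comm (3 / 2 : ℝ)]
    exact mul_le_mul_of_nonneg_left (((hst x).tsum_le_tsum (htl x) hsw).trans hsum) hcf.le
  have hamono : Monotone a := monotone_nat_of_le_succ fun k => by
    linarith [(hs k).1, wSeq_pos k]
  have hbanti : Antitone b := antitone_nat_of_succ_le fun k => by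
    linarith [(hs k).2.1, wSeq_pos k]
  have hle : a ≤ b := fun k => by linarith [hw k, wSeq_pos k]
  have hmem := hamono.ciSup_mem_iInter_Icc_of_antitone hbanti hle
  generalize (⨆ n, a n) = xs at hmem
  have hmem' := Set.mem_iInter.1 hmem
  have hl : ∀ k, a k + wSeq k / 3 ≤ xs := fun k => (hs k).1.trans (hmem' (k + 1)).1
  have hr : ∀ k, xs ≤ b k - wSeq k / 3 := fun k => (hmem' (k + 1)).2.trans (hs k).2.1
  have hl' : ∀ k x, xs ≤ x → 1 / 3 ≤ (x - a k) / (b k - a k) := fun k x hx => by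
    rw [hw, le_div_iff₀ (wSeq_pos k)]; linarith [hl k]
  have hr' : ∀ k x, x ≤ xs → (x - a k) / (b k - a k) ≤ 2 / 3 := fun k x hx => by
    rw [hw, div_le_iff₀ (wSeq_pos k)]; linarith [hr k, hw k]
  have hdm : ∀ k x y, x ≤ y → (x - a k) / (b k - a k) ≤ (y - a k) / (b k - a k) :=
    fun k x y hxy => by
      rw [hw]; exact div_le_div_of_nonneg_right (by linarith) (wSeq_pos k).le
  have hone : ∀ k, bumpOn (a k) (b k) xs = 1 := fun k =>
    bump_mid (hl' k xs le_rfl) (hr' k xs le_rfl)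
  have hlim : Filter.Tendsto (fun k : ℕ => (1 / 3 : ℝ) ^ k) Filter.atTop (nhds 0) :=
    tendsto_pow_atTop_nhds_zero_of_lt_one (by norm_num) (by norm_num)
  have hout : ∀ x, x ≠ xs → ∃ k, x < a k ∨ b k < x := by
    intro x hx
    have : 0 < |x - xs| := abs_pos.2 (sub_ne_zero.2 hx)
    obtain ⟨k, hk⟩ := (hlim.eventually (gt_mem_nhds this)).exists
    refine ⟨k, ?_⟩
    by_contra! hc
    have h1 := hmem' k
    have h2 := hw k
    have h3 := wSeq_le k
    have : |x - xs| ≤ wSeq k := abs_le.2 ⟨by linarith [h1.2], by linarith [h1.1]⟩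
    linarith
  have hval : towerFn m cf a b xs = cf * ∑' k : ℕ, wSeq k ^ m := by
    simp only [towerFn, hone, mul_one]
  refine ⟨xs, ?_, hval, ?_, ?_, ?_⟩
  · refine Set.Subset.antisymm ?_ (Set.singleton_subset_iff.2 hmem)
    intro x hx
    by_contra hne
    obtain ⟨k, hk⟩ := hout x hne
    have := Set.mem_iInter.1 hx k
    rcases hk with hk | hk
    · linarith [this.1]
    · linarith [this.2]
  · intro x hx
    obtain ⟨k, hk⟩ := hout x hx
    rw [hval, towerFn]
    refine mul_lt_mul_of_pos_left ?_ hcf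
    refine Summable.tsum_lt_tsum (i := k) (htl x) ?_ (hst x) hsw
    have hz : bumpOn (a k) (b k) x = 0 := by
      rcases hk with hk | hk
      · refine bump_left ?_
        rw [hw]; exact div_neg_of_neg_of_pos (by linarith) (wSeq_pos k)
      · refine bump_right ?_
        rw [hw, lt_div_iff₀ (wSeq_pos k)]; linarith [hw k]
    rw [hz, mul_zero]; exact hwp k
  · intro x _ y hy hxy
    refine mul_le_mul_of_nonneg_left ((hst x).tsum_le_tsum (fun k => ?_) (hst y)) hcf.le
    exact mul_le_mul_of_nonneg_left (bump_mono (hdm k x y hxy) (hr' k y hy.2)) (hwp k).le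
  · intro x hx y _ hxy
    refine mul_le_mul_of_nonneg_left ((hst y).tsum_le_tsum (fun k => ?_) (hst x)) hcf.le
    exact mul_le_mul_of_nonneg_left (bump_anti (hdm k x y hxy) (hl' k x hx.1)) (hwp k).le
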